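/- arXiv:math/0305087 — 3 statements merged into one kernel-verified Lean document; each statement's English description precedes it below -/
import Mathlib

section
/- Let f : ℤ → ℕ ∪ {∞} be a function with Δ = card(f⁻¹(0)) finite, and let c = 8 + ⌊(Δ + 1)/2⌋. Let k ≥ 2 be an integer, let A be a finite set of 2(k−1) integers with A ⊆ [−c(k−1)³, c(k−1)³] and r_{A,2}(n) ≤ f(n) for all integers n, and let u be an integer with |u| ≤ k² + Δ/2 and r_{A,2}(u) < f(u). Then there exist at least two integers a such that the set A' = A ∪ {a + u, −a} has exactly 2k elements, A' ⊆ [−ck³, ck³], r_{A',2}(n) ≤ f(n) for all integers n, and r_{A',2}(u) = r_{A,2}(u) + 1. -/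
/-- The representation function of order 2: the number (in `ℕ∞`) of ways to
write `n = a₁ + a₂` with `a₁, a₂ ∈ A` and `a₁ ≤ a₂`. -/
noncomputable def rep2 (A : Set ℤ) (n : ℤ) : ℕ∞ :=
  {p : ℤ × ℤ | p.1 ∈ A ∧ p.2 ∈ A ∧ p.1 ≤ p.2 ∧ p.1 + p.2 = n}.encard

theorem rep_aux (f : ℤ → ℕ∞) (A : Set ℤ) (x y u : ℤ) (hu : x + y = u)
    (hle : ∀ n : ℤ, rep2 A n ≤ f n) (hru : rep2 A u < f u)
    (hx : x ∉ A) (hy : y ∉ A) (hxy : x ≠ y)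
    (h1 : ∀ b ∈ A, ∀ b₁ ∈ A, ∀ b₂ ∈ A, b + x ≠ b₁ + b₂)
    (h2 : ∀ b ∈ A, ∀ b₁ ∈ A, ∀ b₂ ∈ A, b + y ≠ b₁ + b₂)
    (h1' : ∀ b ∈ A, f (b + x) ≠ 0) (h2' : ∀ b ∈ A, f (b + y) ≠ 0)
    (h3 : ∀ b₁ ∈ A, ∀ b₂ ∈ A, x + x ≠ b₁ + b₂)
    (h4 : ∀ b₁ ∈ A, ∀ b₂ ∈ A, y + y ≠ b₁ + b₂)
    (h3' : f (x + x) ≠ 0) (h4' : f (y + y) ≠ 0)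
    (h5 : ∀ b₁ ∈ A, ∀ b₂ ∈ A, b₁ + x ≠ b₂ + y)
    (h6 : ∀ b ∈ A, b + x ≠ y + y) (h7 : ∀ b ∈ A, b + y ≠ x + x) :
    (∀ n : ℤ, rep2 (insert x (insert y A)) n ≤ f n) ∧
      rep2 (insert x (insert y A)) u = rep2 A u + 1 := by
  have hU : rep2 (insert x (insert y A)) u = rep2 A u + 1 := by
    unfold rep2
    rw [← Set.encard_insert_of_notMem (a := (min x y, max x y))]
    · congr 1
      ext ⟨p, q⟩
      simp only [Set.mem_insert_iff, Set.mem_setOf_eq, Prod.mk.injEq]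
      constructor
      · rintro ⟨hp, hq, hpq, hs⟩
        rcases hp with rfl | rfl | hp <;> rcases hq with rfl | rfl | hq
        all_goals first
          | (left; omega)
          | (right; exact ⟨hp, hq, hpq, hs⟩)
          | omega
          | (exfalso
             first
              | exact hx (by convert hp using 1; omega)
              | exact hy (by convert hp using 1; omega)
              | exact hx (by convert hq using 1; omega)
              | exact hy (by convert hq using 1; omega))
      · rintro (⟨rfl, rfl⟩ | ⟨hp, hq, h⟩)
        · rcases le_total x y with h | h <;> simp [h] <;> omega
        · exact ⟨.inr (.inr hp), .inr (.inr hq), h⟩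
    · rintro ⟨hp, -⟩
      rcases le_total x y with h | h <;> simp [h] at hp
      · exact hx hp
      · exact hy hp
  refine ⟨fun n => ?_, hU⟩
  by_cases hn : n = u
  · subst hn
    rw [hU]
    exact Order.add_one_le_of_lt hru
  -- classification of representations
  have cls : ∀ p q : ℤ, p ∈ insert x (insert y A) → q ∈ insert x (insert y A) → p + q = n →
      (p ∈ A ∧ q ∈ A) ∨ (∃ b ∈ A, n = b + x ∧ ((p = b ∧ q = x) ∨ (p = x ∧ q = b))) ∨
      (∃ b ∈ A, n = b + y ∧ ((p = b ∧ q = y) ∨ (p = y ∧ q = b))) ∨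
      (n = x + x ∧ p = x ∧ q = x) ∨ (n = y + y ∧ p = y ∧ q = y) := by
    intro p q hp hq hs
    simp only [Set.mem_insert_iff] at hp hq
    rcases hp with hp | hp | hp <;> rcases hq with hq | hq | hq
    · right; right; right; left; omega
    · omega
    · right; left; exact ⟨q, hq, by omega, by omega⟩
    · omega
    · right; right; right; right; omega
    · right; right; left; exact ⟨q, hq, by omega, by omega⟩
    · right; left; exact ⟨p, hp, by omega, by omega⟩
    · right; right; left; exact ⟨p, hp, by omega, by omega⟩
    · exact .inl ⟨hp, hq⟩
  by_cases hS : ∃ b₁ ∈ A, ∃ b₂ ∈ A, n = b₁ + b₂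
  · obtain ⟨b₁, hb₁, b₂, hb₂, hb⟩ := hS
    refine le_trans (Set.encard_le_encard ?_) (hle n)
    rintro ⟨p, q⟩ ⟨hp, hq, hpq, hs⟩
    rcases cls p q hp hq hs with h | ⟨b, hbA, h, -⟩ | ⟨b, hbA, h, -⟩ | ⟨h, -⟩ | ⟨h, -⟩
    · exact ⟨h.1, h.2, hpq, hs⟩
    · exact absurd (h.symm.trans hb) (h1 b hbA _ hb₁ _ hb₂)
    · exact absurd (h.symm.trans hb) (h2 b hbA _ hb₁ _ hb₂)
    · exact absurd (h.symm.trans hb) (h3 _ hb₁ _ hb₂)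
    · exact absurd (h.symm.trans hb) (h4 _ hb₁ _ hb₂)
  · push Not at hS
    have hsub : rep2 (insert x (insert y A)) n ≤ 1 := by
      unfold rep2
      rw [Set.encard_le_one_iff]
      rintro ⟨p, q⟩ ⟨p', q'⟩ ⟨hp, hq, hpq, hs⟩ ⟨hp', hq', hpq', hs'⟩
      simp only at hp hq hpq hs hp' hq' hpq' hs'
      have c1 := cls p q hp hq hs
      have c2 := cls p' q' hp' hq' hs'
      rw [Prod.mk.injEq]
      rcases c1 with h | ⟨b, hbA, h, h'⟩ | ⟨b, hbA, h, h'⟩ | ⟨h, h'⟩ | ⟨h, h'⟩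
      · exact absurd hs.symm (hS p h.1 q h.2)
      all_goals
        rcases c2 with k | ⟨d, hdA, k, k'⟩ | ⟨d, hdA, k, k'⟩ | ⟨k, k'⟩ | ⟨k, k'⟩
        · exact absurd hs'.symm (hS p' k.1 q' k.2)
      · omega
      · exact absurd (h.symm.trans k) (h5 _ hbA _ hdA)
      · exact absurd (show b = x by omega) (fun e => hx (e ▸ hbA))
      · exact absurd (h.symm.trans k) (h6 _ hbA)
      · exact absurd (k.symm.trans h) (h5 _ hdA _ hbA)
      · omega
      · exact absurd (h.symm.trans k) (h7 _ hbA)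
      · exact absurd (show b = y by omega) (fun e => hy (e ▸ hbA))
      · exact absurd (show d = x by omega) (fun e => hx (e ▸ hdA))
      · exact absurd (k.symm.trans h) (h7 _ hdA)
      · omega
      · omega
      · exact absurd (k.symm.trans h) (h6 _ hdA)
      · exact absurd (show d = y by omega) (fun e => hy (e ▸ hdA))
      · omega
      · omega
    by_cases hf : f n = 0
    · have : rep2 (insert x (insert y A)) n = 0 := by
        unfold rep2
        rw [Set.encard_eq_zero, Set.eq_empty_iff_forall_notMem]
        rintro ⟨p, q⟩ ⟨hp, hq, hpq, hs⟩
        rcases cls p q hp hq hs with h | ⟨b, hbA, h, -⟩ | ⟨b, hbA, h, -⟩ | ⟨h, -⟩ | ⟨h, -⟩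
        · exact absurd hs.symm (hS p h.1 q h.2)
        · exact h1' b hbA (h ▸ hf)
        · exact h2' b hbA (h ▸ hf)
        · exact h3' (h ▸ hf)
        · exact h4' (h ▸ hf)
      rw [this]; exact zero_le
    · exact hsub.trans (Order.one_le_iff_ne_zero.mpr hf)

open Finset in
/-- The finset of excluded parameters. -/
theorem bad_exists (A T : Finset ℤ) (u : ℤ) : ∃ B : Finset ℤ,
    #B ≤ 2 * (#A * #T) + 2 * #T + #A * #A + 4 * #A + 1 ∧
    ∀ a ∉ B, a + u ∉ A ∧ -a ∉ A ∧ a + u ≠ -a ∧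
      (∀ b ∈ A, b + (a + u) ∉ T) ∧ (∀ b ∈ A, b + -a ∉ T) ∧
      ((a + u) + (a + u) ∉ T) ∧ (-a + -a ∉ T) ∧
      (∀ b₁ ∈ A, ∀ b₂ ∈ A, b₁ + (a + u) ≠ b₂ + -a) ∧
      (∀ b ∈ A, b + (a + u) ≠ -a + -a) ∧ (∀ b ∈ A, b + -a ≠ (a + u) + (a + u)) := by
  refine ⟨A.image (fun b => b - u) ∪ A.image (fun b => -b) ∪ {(-u) / 2} ∪
    (A ×ˢ T).image (fun p => p.2 - p.1 - u) ∪ (A ×ˢ T).image (fun p => p.1 - p.2) ∪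
    T.image (fun t => (t - 2 * u) / 2) ∪ T.image (fun t => (-t) / 2) ∪
    (A ×ˢ A).image (fun p => (p.2 - p.1 - u) / 2) ∪
    A.image (fun b => (-b - u) / 3) ∪ A.image (fun b => (b - 2 * u) / 3), ?_, ?_⟩
  · have e1 : #(A.image (fun b => b - u)) ≤ #A := card_image_le
    have e2 : #(A.image (fun b => -b)) ≤ #A := card_image_le
    have e4 : #((A ×ˢ T).image (fun p => p.2 - p.1 - u)) ≤ #A * #T :=
      card_image_le.trans (card_product _ _).le
    have e5 : #((A ×ˢ T).image (fun p => p.1 - p.2)) ≤ #A * #T :=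
      card_image_le.trans (card_product _ _).le
    have e6 : #(T.image (fun t => (t - 2 * u) / 2)) ≤ #T := card_image_le
    have e7 : #(T.image (fun t => (-t) / 2)) ≤ #T := card_image_le
    have e8 : #((A ×ˢ A).image (fun p => (p.2 - p.1 - u) / 2)) ≤ #A * #A :=
      card_image_le.trans (card_product _ _).le
    have e9 : #(A.image (fun b => (-b - u) / 3)) ≤ #A := card_image_le
    have e10 : #(A.image (fun b => (b - 2 * u) / 3)) ≤ #A := card_image_le
    have e3 : #({(-u) / 2} : Finset ℤ) = 1 := card_singleton _
    have U : ∀ (X Y : Finset ℤ) (m n : ℕ), #X ≤ m → #Y ≤ n → #(X ∪ Y) ≤ m + n :=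
      fun X Y m n h h' => (card_union_le X Y).trans (add_le_add h h')
    refine (U _ _ _ _ (U _ _ _ _ (U _ _ _ _ (U _ _ _ _ (U _ _ _ _ (U _ _ _ _ (U _ _ _ _
      (U _ _ _ _ (U _ _ _ _ e1 e2) e3.le) e4) e5) e6) e7) e8) e9) e10).trans ?_
    omega
  · intro a ha
    simp only [mem_union, mem_image, mem_product, mem_singleton, Prod.exists, not_or, not_exists,
      not_and] at ha
    obtain ⟨⟨⟨⟨⟨⟨⟨⟨⟨g1, g2⟩, g3⟩, g4⟩, g5⟩, g6⟩, g7⟩, g8⟩, g9⟩, g10⟩ := ha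
    refine ⟨fun h => g1 _ h (by omega), fun h => g2 _ h (by omega), fun h => g3 (by omega),
      fun b hb h => g4 b _ ⟨hb, h⟩ (by omega), fun b hb h => g5 b _ ⟨hb, h⟩ (by omega),
      fun h => g6 _ h (by omega), fun h => g7 _ h (by omega),
      fun b₁ h₁ b₂ h₂ h => g8 b₁ b₂ ⟨h₁, h₂⟩ (by omega),
      fun b hb h => g9 b hb (by omega), fun b hb h => g10 b hb (by omega)⟩

open Finset in
theorem stmt12 (f : ℤ → ℕ∞) (hf : (f ⁻¹' {0}).Finite) (Δ : ℕ)
    (hΔ : (f ⁻¹' {0}).ncard = Δ) (c : ℕ) (hc : c = 8 + (Δ + 1) / 2)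
    (k : ℕ) (hk : 2 ≤ k) (A : Set ℤ) (hAfin : A.Finite)
    (hAcard : A.ncard = 2 * (k - 1))
    (hAsub : ∀ b ∈ A, |b| ≤ (c : ℤ) * ((k : ℤ) - 1) ^ 3)
    (hAle : ∀ n : ℤ, rep2 A n ≤ f n)
    (u : ℤ) (hu : 2 * |u| ≤ 2 * (k : ℤ) ^ 2 + (Δ : ℤ))
    (hru : rep2 A u < f u) :
    ∃ a₁ a₂ : ℤ, a₁ ≠ a₂ ∧
      ∀ a ∈ ({a₁, a₂} : Set ℤ),
        (insert (a + u) (insert (-a) A)).ncard = 2 * k ∧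
        (∀ b ∈ insert (a + u) (insert (-a) A), |b| ≤ (c : ℤ) * (k : ℤ) ^ 3) ∧
        (∀ n : ℤ, rep2 (insert (a + u) (insert (-a) A)) n ≤ f n) ∧
        rep2 (insert (a + u) (insert (-a) A)) u = rep2 A u + 1 := by
  classical
  obtain ⟨j, rfl⟩ : ∃ j, k = j + 1 := ⟨k - 1, by omega⟩
  have hj : 1 ≤ j := by omega
  set F := hAfin.toFinset with hF
  set Z := hf.toFinset with hZ
  have hFc : #F = 2 * j := by
    rw [← Set.ncard_eq_toFinset_card A hAfin, hAcard]; omega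
  have hZc : #Z = Δ := by rw [← Set.ncard_eq_toFinset_card _ hf, hΔ]
  set T := (F ×ˢ F).image (fun p => p.1 + p.2) ∪ Z with hT
  have hTc : #T ≤ (2 * j) * (2 * j) + Δ := by
    refine (card_union_le _ _).trans ?_
    rw [hZc]
    gcongr
    exact card_image_le.trans (by rw [card_product, hFc])
  obtain ⟨B, hBc, hB⟩ := bad_exists F T u
  rw [hFc] at hBc
  set N : ℤ := (c : ℤ) * ((j + 1 : ℕ) : ℤ) ^ 3 with hN
  set G := Icc (-N + |u|) (N - |u|) with hG
  have hcc : (16 + Δ : ℤ) ≤ 2 * c := by omega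
  have hGB : #B + 2 ≤ #G := by
    have hB2 : (#B : ℤ) ≤ 2 * (2 * j * (2 * j * (2 * j) + Δ)) + 2 * (2 * j * (2 * j) + Δ)
        + 2 * j * (2 * j) + 4 * (2 * j) + 1 := by
      have : #B ≤ 2 * (2 * j * (2 * j * (2 * j) + Δ)) + 2 * (2 * j * (2 * j) + Δ)
        + 2 * j * (2 * j) + 4 * (2 * j) + 1 := hBc.trans (by gcongr)
      exact_mod_cast this
    have hG2 : 2 * N + 1 - 2 * |u| ≤ #G := by
      rw [hG, Int.card_Icc]; omega
    have hN2 : (16 + Δ : ℤ) * ((j : ℤ) + 1) ^ 3 ≤ 2 * N := by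
      rw [hN, ← mul_assoc]; push_cast; gcongr
    push_cast at hu
    have hj' : (1 : ℤ) ≤ j := by exact_mod_cast hj
    obtain ⟨i, hi⟩ : ∃ i : ℕ, (j : ℤ) = i + 1 := ⟨j - 1, by omega⟩
    have : (#B : ℤ) + 2 ≤ #G := by
      refine le_trans (add_le_add hB2 le_rfl) (le_trans ?_ hG2)
      have : (0 : ℤ) ≤ Δ := by positivity
      rw [hi] at hN2 hu ⊢
      have key : 0 ≤ (Δ : ℤ) * ((i : ℤ) ^ 3 + 6 * i ^ 2 + 8 * i + 1) := by positivity
      have key2 : (0 : ℤ) ≤ (i : ℤ) ^ 3 := by positivity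
      have key3 : (0 : ℤ) ≤ (i : ℤ) ^ 2 := by positivity
      nlinarith
    exact_mod_cast this
  have hcard : 1 < #(G \ B) := by
    have := le_card_sdiff B G
    omega
  obtain ⟨a₁, h₁, a₂, h₂, hne⟩ := one_lt_card.mp hcard
  refine ⟨a₁, a₂, hne, fun a ha => ?_⟩
  have haG : a ∈ G \ B := by
    rcases ha with rfl | rfl <;> assumption
  rw [mem_sdiff, hG, mem_Icc] at haG
  obtain ⟨⟨hl, hr⟩, haB⟩ := haG
  obtain ⟨q1, q2, q3, q4, q5, q6, q7, q8, q9, q10⟩ := hB a haB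
  have mF : ∀ b, b ∈ F ↔ b ∈ A := fun b => hAfin.mem_toFinset
  have hTs : ∀ t ∉ T, (∀ b₁ ∈ A, ∀ b₂ ∈ A, t ≠ b₁ + b₂) ∧ f t ≠ 0 := by
    intro t ht
    constructor
    · rintro b₁ h₁ b₂ h₂ rfl
      exact ht (mem_union_left _ (mem_image.mpr
        ⟨(b₁, b₂), mem_product.mpr ⟨(mF _).2 h₁, (mF _).2 h₂⟩, rfl⟩))
    · intro h
      exact ht (mem_union_right _ (hf.mem_toFinset.mpr h))
  simp only [mF] at q1 q2 q4 q5 q8 q9 q10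
  refine ⟨?_, ?_, ?_⟩
  · rw [Set.ncard_insert_of_notMem _ (hAfin.insert _), Set.ncard_insert_of_notMem q2 hAfin, hAcard]
    · omega
    · rintro (h | h)
      · exact q3 h
      · exact q1 h
  · rintro b (rfl | rfl | hb)
    · have := neg_abs_le u
      have := le_abs_self u
      exact abs_le.mpr ⟨by omega, by omega⟩
    · have := abs_nonneg u
      exact abs_le.mpr ⟨by omega, by omega⟩
    · refine (hAsub b hb).trans ?_
      rw [hN]
      push_cast
      have : (0 : ℤ) ≤ j := by positivity
      gcongr
      · simp
      · omega
  · exact rep_aux f A (a + u) (-a) u (by ring) hAle hru q1 q2 q3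
      (fun b hb => (hTs _ (q4 b hb)).1) (fun b hb => (hTs _ (q5 b hb)).1)
      (fun b hb => (hTs _ (q4 b hb)).2) (fun b hb => (hTs _ (q5 b hb)).2)
      (hTs _ q6).1 (hTs _ q7).1 (hTs _ q6).2 (hTs _ q7).2 q8 q9 q10
end

section
/- Let f : ℤ → ℕ ∪ {∞} be a function, let (u_i)_{i≥1} be a sequence of integers such that for every integer n, f(n) equals the number of indices i with u_i = n, and let (i_k)_{k≥1} be a strictly increasing sequence of positive integers. Let (A_k)_{k≥1} be an increasing sequence of finite sets of integers such that for every k: r_{A_k,2}(n) ≤ f(n) for all n ∈ ℤ, and r_{A_k,2}(u_j) ≥ card({i ≤ i_k : u_i = u_j}) for j = 1, …, k. Then the set A = ⋃_{k≥1} A_k satisfies r_{A,2}(n) = f(n) for all integers n. -/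
theorem encard_iUnion_le_aux {α : Type*} (S : ℕ → Set α) (hS : Monotone S) (c : ℕ∞)
    (h : ∀ k, (S k).encard ≤ c) : (⋃ k, S k).encard ≤ c := by
  rw [← ENat.forall_natCast_le_iff_le]
  intro a ha
  obtain ⟨t, ht, hta⟩ := Set.exists_subset_encard_eq ha
  have hfin : t.Finite := Set.finite_of_encard_eq_coe hta
  obtain ⟨k, hk⟩ : ∃ k, t ⊆ S k := by
    have h1 : ∀ x ∈ t, ∃ k, x ∈ S k := fun x hx => by simpa using ht hx
    choose! g hg using h1
    obtain ⟨M, hM⟩ := (hfin.image g).bddAbove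
    exact ⟨M, fun x hx => hS (hM ⟨x, hx, rfl⟩) (hg x hx)⟩
  rw [← hta]
  exact (Set.encard_le_encard hk).trans (h k)

theorem rep2_mono_aux {A B : Set ℤ} (h : A ⊆ B) (n : ℤ) : rep2 A n ≤ rep2 B n :=
  Set.encard_le_encard fun _ hp => ⟨h hp.1, h hp.2.1, hp.2.2⟩

theorem stmt13 (f : ℤ → ℕ∞) (u : ℕ → ℤ)
    (hu : ∀ n : ℤ, f n = {i : ℕ | 1 ≤ i ∧ u i = n}.encard)
    (idx : ℕ → ℕ) (hidxpos : ∀ k : ℕ, 1 ≤ k → 1 ≤ idx k)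
    (hidxmono : ∀ k : ℕ, 1 ≤ k → idx k < idx (k + 1))
    (A : ℕ → Set ℤ) (hfin : ∀ k : ℕ, 1 ≤ k → (A k).Finite)
    (hmono : ∀ k : ℕ, 1 ≤ k → A k ⊆ A (k + 1))
    (hle : ∀ k : ℕ, 1 ≤ k → ∀ n : ℤ, rep2 (A k) n ≤ f n)
    (hge : ∀ k : ℕ, 1 ≤ k → ∀ j : ℕ, 1 ≤ j → j ≤ k →
      {i : ℕ | 1 ≤ i ∧ i ≤ idx k ∧ u i = u j}.encard ≤ rep2 (A k) (u j)) :
    ∀ n : ℤ, rep2 (⋃ k ≥ 1, A k) n = f n := by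
  intro n
  have hB : Monotone fun k => A (k + 1) :=
    monotone_nat_of_le_succ fun k => hmono (k + 1) (by omega)
  have hI : Monotone fun k => idx (k + 1) :=
    monotone_nat_of_le_succ fun k => (hidxmono (k + 1) (by omega)).le
  have hI' : StrictMono fun k => idx (k + 1) :=
    strictMono_nat_of_lt_succ fun k => hidxmono (k + 1) (by omega)
  apply le_antisymm
  · have key := encard_iUnion_le_aux
      (fun k => {p : ℤ × ℤ | p.1 ∈ A (k+1) ∧ p.2 ∈ A (k+1) ∧ p.1 ≤ p.2 ∧ p.1 + p.2 = n})
      (fun a b hab p hp => ⟨hB hab hp.1, hB hab hp.2.1, hp.2.2⟩) (f n)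
      (fun k => hle (k + 1) (by omega) n)
    refine le_trans (Set.encard_le_encard ?_) key
    rintro p ⟨h1, h2, h3⟩
    simp only [Set.mem_iUnion] at h1 h2
    obtain ⟨a, ha, h1⟩ := h1
    obtain ⟨b, hb, h2⟩ := h2
    obtain ⟨a, rfl⟩ : ∃ a', a = a' + 1 := ⟨a - 1, by omega⟩
    obtain ⟨b, rfl⟩ : ∃ b', b = b' + 1 := ⟨b - 1, by omega⟩
    exact Set.mem_iUnion.2 ⟨max a b, hB (le_max_left a b) h1, hB (le_max_right a b) h2, h3⟩
  · rw [hu]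
    have key := encard_iUnion_le_aux
      (fun k => {i : ℕ | 1 ≤ i ∧ i ≤ idx (k+1) ∧ u i = n})
      (fun a b hab p hp => ⟨hp.1, hp.2.1.trans (hI hab), hp.2.2⟩) (rep2 (⋃ k ≥ 1, A k) n) ?_
    · refine le_trans (Set.encard_le_encard ?_) key
      rintro i ⟨h1, h2⟩
      exact Set.mem_iUnion.2 ⟨i, h1, hI'.le_apply, h2⟩
    · intro k
      rcases Set.eq_empty_or_nonempty {i : ℕ | 1 ≤ i ∧ i ≤ idx (k+1) ∧ u i = n} with h | ⟨j, hj⟩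
      · simp only [h, Set.encard_empty, zero_le]
      · obtain ⟨hj1, -, rfl⟩ := hj
        have h1 := hge (max k j + 1) (by omega) j hj1 (by omega)
        refine le_trans (Set.encard_le_encard ?_) (h1.trans (rep2_mono_aux ?_ _))
        · rintro i ⟨a, b, c⟩
          exact ⟨a, b.trans (hI (le_max_left k j)), c⟩
        · intro x hx
          simp only [Set.mem_iUnion]
          exact ⟨max k j + 1, by omega, hx⟩
end

section
/- Let f : ℤ → ℕ ∪ {∞} be a function with Δ = card(f⁻¹(0)) finite, let k ≥ 2, let A be a set of 2(k−1) integers, and let u be an integer. Then the number of integers a that fail at least one of the following conditions is at most 16(k−1)³ + 12(k−1)² + (4Δ + 8)(k−1) + 2Δ: (1) (A + {a + u, −a}) ∩ 2A = ∅; (2) (A + {a + u, −a}) ∩ f⁻¹(0) = ∅; (3) (A + a + u) ∩ (A − a) = ∅; (4) {2a + 2u, −2a} ∩ 2A = ∅; (5) {2a + 2u, −2a} ∩ f⁻¹(0) = ∅; (6) {2a + 2u, −2a} ∩ (A + {a + u, −a}) = ∅. -/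
open scoped Pointwise

theorem stmt17 (f : ℤ → ℕ∞) (hf : (f ⁻¹' {0}).Finite) (Δ : ℕ)
    (hΔ : (f ⁻¹' {0}).ncard = Δ) (k : ℕ) (hk : 2 ≤ k)
    (A : Set ℤ) (hAfin : A.Finite) (hAcard : A.ncard = 2 * (k - 1)) (u : ℤ) :
    {a : ℤ | ¬ ((A + ({a + u, -a} : Set ℤ)) ∩ (A + A) = ∅ ∧
        (A + ({a + u, -a} : Set ℤ)) ∩ (f ⁻¹' {0}) = ∅ ∧
        (A + ({a + u} : Set ℤ)) ∩ (A + ({-a} : Set ℤ)) = ∅ ∧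
        ({2 * a + 2 * u, -2 * a} : Set ℤ) ∩ (A + A) = ∅ ∧
        ({2 * a + 2 * u, -2 * a} : Set ℤ) ∩ (f ⁻¹' {0}) = ∅ ∧
        ({2 * a + 2 * u, -2 * a} : Set ℤ) ∩ (A + ({a + u, -a} : Set ℤ)) = ∅)}.encard
      ≤ ((16 * (k - 1) ^ 3 + 12 * (k - 1) ^ 2 + (4 * Δ + 8) * (k - 1) + 2 * Δ : ℕ) : ℕ∞) := by
  classical
  obtain ⟨m, rfl⟩ : ∃ m, k = m + 1 := ⟨k - 1, by omega⟩
  simp only [Nat.add_sub_cancel] at hAcard ⊢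
  generalize hZ' : f ⁻¹' {0} = Z' at *
  obtain ⟨B, rfl⟩ := hAfin.exists_finset_coe
  obtain ⟨Z, rfl⟩ := hf.exists_finset_coe
  rw [Set.ncard_coe_finset] at hAcard hΔ
  have key : ∀ S : Finset ℤ, S.card ≤ 16 * m ^ 3 + 12 * m ^ 2 + (4 * Δ + 8) * m + 2 * Δ →
      ∀ T : Set ℤ, T ⊆ (S : Set ℤ) →
      T.encard ≤ ((16 * m ^ 3 + 12 * m ^ 2 + (4 * Δ + 8) * m + 2 * Δ : ℕ) : ℕ∞) := by
    intro S hS T hT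
    refine (Set.encard_le_encard hT).trans ?_
    rw [Set.encard_coe_eq_coe_finsetCard]
    exact_mod_cast hS
  let P3 := B ×ˢ B ×ˢ B
  let S1 := P3.image (fun p => p.2.1 + p.2.2 - p.1 - u)
  let S2 := P3.image (fun p => p.1 - p.2.1 - p.2.2)
  let S3 := (B ×ˢ Z).image (fun p => p.2 - p.1 - u)
  let S4 := (B ×ˢ Z).image (fun p => p.1 - p.2)
  let S5 := (B ×ˢ B).image (fun p => (p.2 - p.1 - u) / 2)
  let S6 := (B ×ˢ B).image (fun p => (p.1 + p.2 - 2 * u) / 2)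
  let S7 := (B ×ˢ B).image (fun p => (-(p.1 + p.2)) / 2)
  let S8 := Z.image (fun z => (z - 2 * u) / 2)
  let S9 := Z.image (fun z => (-z) / 2)
  let S10 := B.image (fun x => x - u)
  let S11 := B.image (fun x => (x - 2 * u) / 3)
  let S12 := B.image (fun x => (-x - u) / 3)
  let S13 := B.image (fun x => -x)
  refine key (S1 ∪ S2 ∪ S3 ∪ S4 ∪ S5 ∪ S6 ∪ S7 ∪ S8 ∪ S9 ∪ S10 ∪ S11 ∪ S12 ∪ S13) ?_ _ ?_
  · have c3 : P3.card = (2 * m) * ((2 * m) * (2 * m)) := by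
      simp only [P3, Finset.card_product, hAcard]
    have cz : (B ×ˢ Z).card = 2 * m * Δ := by
      simp only [Finset.card_product, hAcard, hΔ]
    have c2 : (B ×ˢ B).card = 2 * m * (2 * m) := by
      simp only [Finset.card_product, hAcard]
    have h1 : S1.card ≤ _ := Finset.card_image_le
    have h2 : S2.card ≤ _ := Finset.card_image_le
    have h3 : S3.card ≤ _ := Finset.card_image_le
    have h4 : S4.card ≤ _ := Finset.card_image_le
    have h5 : S5.card ≤ _ := Finset.card_image_le
    have h6 : S6.card ≤ _ := Finset.card_image_le
    have h7 : S7.card ≤ _ := Finset.card_image_le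
    have h8 : S8.card ≤ _ := Finset.card_image_le
    have h9 : S9.card ≤ _ := Finset.card_image_le
    have h10 : S10.card ≤ _ := Finset.card_image_le
    have h11 : S11.card ≤ _ := Finset.card_image_le
    have h12 : S12.card ≤ _ := Finset.card_image_le
    have h13 : S13.card ≤ _ := Finset.card_image_le
    rw [c3] at h1 h2
    rw [cz] at h3 h4
    rw [c2] at h5 h6 h7
    rw [hΔ] at h8 h9
    rw [hAcard] at h10 h11 h12 h13
    clear_value S1 S2 S3 S4 S5 S6 S7 S8 S9 S10 S11 S12 S13
    have un : ∀ (S T : Finset ℤ) (a b : ℕ), S.card ≤ a → T.card ≤ b → (S ∪ T).card ≤ a + b :=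
      fun S T a b hS hT => (Finset.card_union_le S T).trans (add_le_add hS hT)
    refine (un _ _ _ _ (un _ _ _ _ (un _ _ _ _ (un _ _ _ _ (un _ _ _ _ (un _ _ _ _ (un _ _ _ _
      (un _ _ _ _ (un _ _ _ _ (un _ _ _ _ (un _ _ _ _ (un _ _ _ _ h1 h2) h3) h4) h5) h6) h7) h8)
      h9) h10) h11) h12) h13).trans (le_of_eq ?_)
    ring
  · intro a ha
    by_contra hn
    simp only [Finset.coe_union, Set.mem_union, not_or, Finset.mem_coe] at hn
    obtain ⟨⟨⟨⟨⟨⟨⟨⟨⟨⟨⟨⟨n1, n2⟩, n3⟩, n4⟩, n5⟩, n6⟩, n7⟩, n8⟩, n9⟩, n10⟩, n11⟩, n12⟩, n13⟩ := hn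
    have pair : ∀ c p q : ℤ, c ∈ ({p, q} : Set ℤ) → c = p ∨ c = q := fun c p q h => by simpa using h
    apply ha
    refine ⟨?_, ?_, ?_, ?_, ?_, ?_⟩ <;> rw [Set.eq_empty_iff_forall_notMem]
    · rintro c ⟨⟨x, hx, w, hw, rfl⟩, ⟨y, hy, z, hz, h⟩⟩
      have hx : x ∈ B := hx
      have hy : y ∈ B := hy
      have hz : z ∈ B := hz
      simp only at h
      rcases pair _ _ _ hw with rfl | rfl
      · exact n1 (Finset.mem_image.2 ⟨(x, y, z), by simp [P3, hx, hy, hz], by simp only; omega⟩)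
      · exact n2 (Finset.mem_image.2 ⟨(x, y, z), by simp [P3, hx, hy, hz], by simp only; omega⟩)
    · rintro c ⟨⟨x, hx, w, hw, rfl⟩, hz⟩
      have hx : x ∈ B := hx
      simp only [Finset.mem_coe] at hz
      rcases pair _ _ _ hw with rfl | rfl
      · exact n3 (Finset.mem_image.2 ⟨(x, _), Finset.mem_product.2 ⟨hx, hz⟩, by simp only; omega⟩)
      · exact n4 (Finset.mem_image.2 ⟨(x, _), Finset.mem_product.2 ⟨hx, hz⟩, by simp only; omega⟩)
    · rintro c ⟨⟨x, hx, w, hw, rfl⟩, ⟨y, hy, z, hz, h⟩⟩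
      have hx : x ∈ B := hx
      have hy : y ∈ B := hy
      rw [Set.mem_singleton_iff] at hw hz
      simp only at h
      exact n5 (Finset.mem_image.2 ⟨(x, y), Finset.mem_product.2 ⟨hx, hy⟩, by simp only; omega⟩)
    · rintro c ⟨hc, ⟨y, hy, z, hz, h⟩⟩
      have hy : y ∈ B := hy
      have hz : z ∈ B := hz
      simp only at h
      rcases pair _ _ _ hc with rfl | rfl
      · exact n6 (Finset.mem_image.2 ⟨(y, z), Finset.mem_product.2 ⟨hy, hz⟩, by simp only; omega⟩)
      · exact n7 (Finset.mem_image.2 ⟨(y, z), Finset.mem_product.2 ⟨hy, hz⟩, by simp only; omega⟩)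
    · rintro c ⟨hc, hz⟩
      simp only [Finset.mem_coe] at hz
      rcases pair _ _ _ hc with rfl | rfl
      · exact n8 (Finset.mem_image.2 ⟨_, hz, by omega⟩)
      · exact n9 (Finset.mem_image.2 ⟨_, hz, by omega⟩)
    · rintro c ⟨hc, ⟨x, hx, w, hw, h⟩⟩
      have hx : x ∈ B := hx
      simp only at h
      rcases pair _ _ _ hc with rfl | rfl <;> rcases pair _ _ _ hw with rfl | rfl
      · exact n10 (Finset.mem_image.2 ⟨x, hx, by omega⟩)
      · exact n11 (Finset.mem_image.2 ⟨x, hx, by omega⟩)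
      · exact n12 (Finset.mem_image.2 ⟨x, hx, by omega⟩)
      · exact n13 (Finset.mem_image.2 ⟨x, hx, by omega⟩)
end
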